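/- Let N be a positive integer. Let f : ℝ → ℂ be a continuous 1-periodic function whose sequence of Fourier coefficients f̂_k := ∫_{0}^{1} e^{−2πiky} f(y) dy is absolutely summable, and let g : ℝ → ℂ be a continuous N-periodic function with Σ_{m ∈ ℤ} |ĝ(2πm/N)| < ∞, where ĝ(z) := ∫_{−N/2}^{N/2} e^{−izy} g(y) dy. Then ∫_{−N/2}^{N/2} conj(f(x)) · g(x) dx = ∫_{0}^{1} conj(f(x)) · ( Σ_{ℓ ∈ ℤ} e^{2πiℓx} ĝ(2πℓ) ) dx. -/

import Mathlib

/-! Both sides equal the Parseval sum `∑ₖ conj f̂ₖ · ĝ(2πk)`. On the left, `f` is replaced by its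
absolutely convergent Fourier series (`hasSum_fourierCoef1`) and integrated termwise against `g`;
on the right, the series `∑ ĝ(2πℓ) e^{2πiℓx}`, which converges absolutely since the frequencies
`2πℓ` are among the `2πm/N`, is integrated termwise against `conj f`. Both exchanges of sum and
integral are instances of `tsum_integral_aux`. -/

open Real Finset

/-- The Fourier transform `ĝ(z) = ∫_{-N/2}^{N/2} e^{-izy} g(y) dy` of an `N`-periodic
function `g`. -/
noncomputable def hatN (N : ℕ) (g : ℝ → ℂ) (z : ℝ) : ℂ :=
  ∫ y in (-(N : ℝ) / 2)..((N : ℝ) / 2), Complex.exp (-Complex.I * ((z * y : ℝ) : ℂ)) * g y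

/-- The `k`-th Fourier coefficient `f̂_k = ∫_0^1 e^{-2πiky} f(y) dy` of a `1`-periodic
function `f`. -/
noncomputable def fourierCoef1 (f : ℝ → ℂ) (k : ℤ) : ℂ :=
  ∫ y in (0 : ℝ)..1, Complex.exp (-Complex.I * ((2 * π * (k : ℝ) * y : ℝ) : ℂ)) * f y

/-- Termwise integration of an absolutely convergent series against a continuous function;
the terms are coefficients times continuous functions bounded by one. -/
lemma tsum_integral_aux (c : ℤ → ℂ) (e : ℤ → ℝ → ℂ) (h : ℝ → ℂ) (u v : ℝ)
    (hc : Summable (fun k => ‖c k‖)) (he : ∀ k, Continuous (e k)) (he1 : ∀ k x, ‖e k x‖ ≤ 1)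
    (hh : Continuous h) :
    (∫ x in u..v, h x * ∑' k, e k x * c k) = ∑' k, c k * ∫ x in u..v, h x * e k x := by
  have hle : ∀ k x, ‖e k x * c k‖ ≤ ‖c k‖ := fun k x => by
    rw [norm_mul]
    exact mul_le_of_le_one_left (norm_nonneg _) (he1 k x)
  have key := intervalIntegral.hasSum_integral_of_dominated_convergence (μ := MeasureTheory.volume)
    (a := u) (b := v)
    (F := fun k x => h x * (e k x * c k)) (f := fun x => h x * ∑' k, e k x * c k)
    (fun k x => ‖h x‖ * ‖c k‖)
    (fun k => (hh.mul ((he k).mul continuous_const)).aestronglyMeasurable)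
    (fun k => .of_forall fun x _ => by
      rw [norm_mul]
      exact mul_le_mul_of_nonneg_left (hle k x) (norm_nonneg _))
    (.of_forall fun x _ => hc.mul_left _)
    (by
      simp_rw [tsum_mul_left]
      exact (hh.norm.mul continuous_const).intervalIntegrable _ _)
    (.of_forall fun x _ =>
      ((Summable.of_norm_bounded hc (fun k => hle k x)).hasSum).mul_left _)
  rw [← key.tsum_eq]
  refine tsum_congr fun k => ?_
  rw [← intervalIntegral.integral_const_mul]
  exact intervalIntegral.integral_congr fun x _ => by ring

/-- Fourier inversion: a continuous `1`-periodic function with absolutely summable Fourier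
coefficients is the pointwise sum of its Fourier series. -/
lemma hasSum_fourierCoef1 (f : ℝ → ℂ) (hf : Continuous f) (hfper : Function.Periodic f 1)
    (hfsum : Summable (fun k : ℤ => ‖fourierCoef1 f k‖)) (x : ℝ) :
    HasSum (fun k : ℤ => Complex.exp (Complex.I * ((2 * π * (k : ℝ) * x : ℝ) : ℂ))
      * fourierCoef1 f k) (f x) := by
  let F : C(AddCircle (1 : ℝ), ℂ) := ⟨hfper.lift, hf.quotient_lift _⟩
  have hF : ∀ y : ℝ, F (y : AddCircle (1 : ℝ)) = f y := fun y => rfl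
  have hco : ∀ k, fourierCoeff F k = fourierCoef1 f k := fun k => by
    rw [fourierCoeff_eq_intervalIntegral F k 0, fourierCoef1]
    simp only [zero_add, one_div, inv_one, one_smul]
    refine intervalIntegral.integral_congr fun y _ => ?_
    simp only [hF, fourier_coe_apply, smul_eq_mul]
    congr 2
    push_cast
    ring
  have hs : Summable (fourierCoeff F) := by
    rw [funext hco]
    exact hfsum.of_norm
  have h := has_pointwise_sum_fourier_series_of_summable hs (x : AddCircle (1 : ℝ))
  rw [hF] at h
  refine h.congr_fun ?_
  intro k
  rw [hco, fourier_coe_apply, smul_eq_mul, mul_comm]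
  congr 2
  push_cast
  ring

lemma conj_exp_I_mul (t : ℝ) :
    (starRingEnd ℂ) (Complex.exp (Complex.I * (t : ℂ))) = Complex.exp (-Complex.I * (t : ℂ)) := by
  rw [← Complex.exp_conj, map_mul, Complex.conj_I, Complex.conj_ofReal]

lemma conj_exp_neg_I_mul (t : ℝ) :
    (starRingEnd ℂ) (Complex.exp (-Complex.I * (t : ℂ))) = Complex.exp (Complex.I * (t : ℂ)) := by
  rw [← conj_exp_I_mul, Complex.conj_conj]

theorem stmt13 (N : ℕ) (hN : 0 < N) (f g : ℝ → ℂ) (hf : Continuous f)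
    (hfper : Function.Periodic f 1) (hfsum : Summable (fun k : ℤ => ‖fourierCoef1 f k‖))
    (hg : Continuous g) (hgper : Function.Periodic g N)
    (hgsum : Summable (fun m : ℤ => ‖hatN N g (2 * π * (m : ℝ) / N)‖)) :
    (∫ x in (-(N : ℝ) / 2)..((N : ℝ) / 2), (starRingEnd ℂ) (f x) * g x)
      = ∫ x in (0 : ℝ)..1, (starRingEnd ℂ) (f x)
          * ∑' ℓ : ℤ, Complex.exp (Complex.I * ((2 * π * (ℓ : ℝ) * x : ℝ) : ℂ))
              * hatN N g (2 * π * (ℓ : ℝ)) := by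
  -- The sampled coefficients at `2πℓ` are the subfamily `m = N ℓ` of the given ones.
  have hcsum : Summable (fun ℓ : ℤ => ‖hatN N g (2 * π * (ℓ : ℝ))‖) := by
    have hN' : (N : ℝ) ≠ 0 := by positivity
    have hinj : Function.Injective (fun ℓ : ℤ => (N : ℤ) * ℓ) :=
      mul_right_injective₀ (by exact_mod_cast hN.ne')
    refine (hgsum.comp_injective hinj).congr fun ℓ => ?_
    simp only [Function.comp_apply]
    congr 2
    push_cast
    field_simp
  have hfc : Continuous fun x => (starRingEnd ℂ) (f x) := Complex.continuous_conj.comp hf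
  have hfsum' : Summable (fun k : ℤ => ‖(starRingEnd ℂ) (fourierCoef1 f k)‖) := by
    simpa only [RCLike.norm_conj] using hfsum
  have hinv : ∀ x, (starRingEnd ℂ) (f x) =
      ∑' k : ℤ, Complex.exp (-Complex.I * ((2 * π * (k : ℝ) * x : ℝ) : ℂ))
        * (starRingEnd ℂ) (fourierCoef1 f k) := fun x => by
    rw [← (hasSum_fourierCoef1 f hf hfper hfsum x).tsum_eq, Complex.conj_tsum]
    exact tsum_congr fun k => by rw [map_mul, conj_exp_I_mul]
  have hcoef : ∀ k : ℤ, (starRingEnd ℂ) (fourierCoef1 f k) =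
      ∫ x in (0 : ℝ)..1, (starRingEnd ℂ) (f x)
        * Complex.exp (Complex.I * ((2 * π * (k : ℝ) * x : ℝ) : ℂ)) := fun k => by
    rw [fourierCoef1, intervalIntegral.integral_of_le zero_le_one,
      intervalIntegral.integral_of_le zero_le_one, ← integral_conj]
    refine MeasureTheory.integral_congr_ae (.of_forall fun x => ?_)
    simp only [map_mul, conj_exp_neg_I_mul]
    ring
  have hhat : ∀ k : ℤ, hatN N g (2 * π * (k : ℝ)) =
      ∫ x in (-(N : ℝ) / 2)..((N : ℝ) / 2),
        g x * Complex.exp (-Complex.I * ((2 * π * (k : ℝ) * x : ℝ) : ℂ)) := fun k =>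
    intervalIntegral.integral_congr fun x _ => mul_comm _ _
  have hL : (∫ x in (-(N : ℝ) / 2)..((N : ℝ) / 2), (starRingEnd ℂ) (f x) * g x) =
      ∑' k : ℤ, (starRingEnd ℂ) (fourierCoef1 f k) * hatN N g (2 * π * (k : ℝ)) := by
    simp_rw [hhat]
    rw [← tsum_integral_aux _ _ g _ _ hfsum' (fun k => by fun_prop) (fun k x => ?_) hg]
    · refine intervalIntegral.integral_congr fun x _ => ?_
      simp only [hinv x, mul_comm]
    · rw [← conj_exp_I_mul, RCLike.norm_conj, Complex.norm_exp_I_mul_ofReal]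
  rw [hL, tsum_integral_aux _ _ _ _ _ hcsum (fun k => by fun_prop)
    (fun k x => (Complex.norm_exp_I_mul_ofReal _).le) hfc]
  exact tsum_congr fun k => by rw [← hcoef, mul_comm]
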